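/- The 3-SAT* instance has a satisfying truth assignment if and only if the constructed 2-RAR instance admits a 7-schedule (equivalently, a feasible schedule with makespan at most 7, since the total job size equals 7·|M|). This is the combinatorial core of the theorem that, unless P=NP, there is no better than 8/7-approximation for 2-RAR makespan minimization and no better than 7/6-approximation for its fair allocation version. -/

import Mathlib

/-!
Write `(j, q)` for the block consisting of the machine `TMach(j,q)`, the two clause machines at the
occurrences `(j,2q)`, `(j,2q+1)`, and the four jobs `VJob(j,t,∘)` with `⌊t/2⌋ = q`.

From a satisfying assignment to a schedule: if the literal at occurrence `(j,t)` is true, its clause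
machine receives the `⊥`-job of `(j,t)` and `TMach(j,⌊t/2⌋)` receives the `⊤`-job; otherwise the two
are swapped. `TJob(j,2)` goes to the machine of the false literal. Within a clause, the number
of jobs `CJob(i,s)` of size `5` equals the number of true literals, so they can be permuted to sit
exactly on the true positions (`exists_perm`).

From a schedule to a satisfying assignment: eligibility pins down the `TJob`s, and confines the
`CJob`s to clause machines. Two `CJob`s overload a machine, so their placement is an injective, hence
bijective, self-map `f` of `[2m] × [3]` which does not decrease the clause index; comparing sums, it
preserves the clause index. The remaining load on a clause machine is then `2` or `3`, so
exactly one `VJob` sits there, while each truth machine needs at least two; since there are `8n`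
`VJob`s, each truth machine has exactly two (`tload`). A `VJob` never goes to a machine of an earlier
block, and comparing sums again shows that it stays in its own block (`blk_eq`). The two `VJob`s on
a truth machine have the same type, determined by whether `TJob(j,2)` is there; counting the two
`⊥`-jobs of the block shows that the two clause machines of the block both carry the opposite type
(`bot_clause`). Hence the presence of a `⊥`-job on the clause machine is the truth value of a
literal under a consistent assignment. It is equivalent to the `CJob` there having size `5`, so the
number of true literals of a clause is the number of its `CJob`s of size `5`, which is as required.
-/

open Finset

/-- A 3-SAT* instance: `n` variables, `2m` clauses of 3 literals each
(the first `m` are 1-in-3-clauses, the last `m` are 2-in-3-clauses).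
`lit i s` is the literal at position `s` of clause `i`, given as a pair
(variable, polarity). The occurrence bijection `occ` maps the pair `(j,t)`
(the `t`-th occurrence of variable `x_j`, positive for `t = 0,1`, negative for
`t = 2,3`) to the corresponding (clause, position) pair; `occ_spec` says the
literal there is indeed `x_j` with the right polarity. Bijectivity of `occ`
encodes that every literal occurs exactly twice (and forces `6m = 4n`). -/
structure SAT3Star where
  n : ℕ
  m : ℕ
  lit : Fin (2 * m) → Fin 3 → Fin n × Bool
  occ : (Fin n × Fin 4) ≃ (Fin (2 * m) × Fin 3)
  occ_spec : ∀ jt : Fin n × Fin 4,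
    lit (occ jt).1 (occ jt).2 = (jt.1, decide ((jt.2 : ℕ) < 2))

/-- `α` satisfies the 3-SAT* instance: every `k`-in-3-clause has exactly `k`
true literals. -/
def SAT3Star.Satisfies (S : SAT3Star) (α : Fin S.n → Bool) : Prop :=
  ∀ i : Fin (2 * S.m),
    (Finset.univ.filter (fun s : Fin 3 => α (S.lit i s).1 = (S.lit i s).2)).card =
      if (i : ℕ) < S.m then 1 else 2

/-- `⌊t/2⌋` as an element of `Fin 2`. -/
def half (t : Fin 4) : Fin 2 := ⟨(t : ℕ) / 2, by have := t.isLt; omega⟩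

/-- Machines of the 2-RAR instance: `TMach(j,q)` (left) and `CMach(i,s)` (right). -/
abbrev QMach (S : SAT3Star) := (Fin S.n × Fin 2) ⊕ (Fin (2 * S.m) × Fin 3)

/-- Jobs: `TJob(j,ℓ)` (left), `CJob(i,s)` (middle), `VJob(j,t,∘)` (right). -/
abbrev QJob (S : SAT3Star) := (Fin S.n × Fin 3) ⊕ (Fin (2 * S.m) × Fin 3) ⊕ (Fin S.n × Fin 4 × Bool)

/-- Job sizes: `TJob(j,ℓ)` has size 1 for `ℓ∈[2]` and 2 for `ℓ=2`; `CJob(i,s)` has size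
`4 + φ(i,s)`; `VJob(j,t,⊤)` has size 3 and `VJob(j,t,⊥)` has size 2. -/
def qSize (S : SAT3Star) : QJob S → ℕ
  | .inl (_, l) => if (l : ℕ) = 2 then 2 else 1
  | .inr (.inl (i, s)) =>
      4 + (if (s : ℕ) = 0 then 0
           else if (s : ℕ) = 2 then 1
           else if (i : ℕ) < S.m then 0 else 1)
  | .inr (.inr (_, _, b)) => if b then 3 else 2

/-- Resource capacities of the machines (two resources). -/
def qCap (S : SAT3Star) : QMach S → ℕ × ℕ
  | .inl (j, q) => (2 * (j : ℕ) + (q : ℕ), 6 * S.n - (2 * (j : ℕ) + (q : ℕ)))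
  | .inr c => (2 * S.n + (c.1 : ℕ), 4 * ((S.occ.symm c).1 : ℕ) + ((S.occ.symm c).2 : ℕ))

/-- Resource demands of the jobs (two resources). -/
def qDem (S : SAT3Star) : QJob S → ℕ × ℕ
  | .inl (j, l) =>
      if (l : ℕ) = 0 then (2 * (j : ℕ), 6 * S.n - 2 * (j : ℕ))
      else if (l : ℕ) = 1 then (2 * (j : ℕ) + 1, 6 * S.n - (2 * (j : ℕ) + 1))
      else (2 * (j : ℕ), 6 * S.n - (2 * (j : ℕ) + 1))
  | .inr (.inl (i, _)) => (2 * S.n + (i : ℕ), 0)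
  | .inr (.inr (j, t, _)) => (2 * (j : ℕ) + (t : ℕ) / 2, 4 * (j : ℕ) + (t : ℕ))

/-- Eligibility: both resource demands are met by the capacities. -/
def qElig (S : SAT3Star) (job : QJob S) (M : QMach S) : Prop :=
  (qDem S job).1 ≤ (qCap S M).1 ∧ (qDem S job).2 ≤ (qCap S M).2

/-- Load of a machine under a schedule. -/
def qLoad (S : SAT3Star) (σ : QJob S → QMach S) (M : QMach S) : ℕ :=
  ∑ j ∈ Finset.univ.filter (fun j => σ j = M), qSize S j

/-- A 7-schedule: every job on an eligible machine, every machine with load exactly 7. -/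
def SevenSchedule (S : SAT3Star) (σ : QJob S → QMach S) : Prop :=
  (∀ j, qElig S j (σ j)) ∧ ∀ M, qLoad S σ M = 7

/-! ### Blocks, occurrences and loads -/

/-- The block `(j, ⌊t/2⌋)` of an occurrence `(j, t)`, i.e. its literal. -/
def occBlock {n : ℕ} (x : Fin n × Fin 4) : Fin n × Fin 2 := (x.1, half x.2)

/-- The block of a machine; a clause machine belongs to the block of its occurrence. -/
def machBlock (S : SAT3Star) : QMach S → Fin S.n × Fin 2
  | .inl p => p
  | .inr c => occBlock (S.occ.symm c)

/-- The position `2j+q` of the block `(j, q)` in the linear order of blocks. -/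
def rank {n : ℕ} (p : Fin n × Fin 2) : ℕ := 2 * (p.1 : ℕ) + (p.2 : ℕ)

lemma machBlock_inl (S : SAT3Star) (p : Fin S.n × Fin 2) : machBlock S (.inl p) = p := rfl

lemma machBlock_occ (S : SAT3Star) (x : Fin S.n × Fin 4) :
    machBlock S (.inr (S.occ x)) = occBlock x := by
  simp [machBlock]

lemma rank_injective {n : ℕ} : Function.Injective (rank (n := n)) := by
  rintro ⟨⟨j, hj⟩, ⟨q, hq⟩⟩ ⟨⟨j', hj'⟩, ⟨q', hq'⟩⟩ h
  simp only [rank] at h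
  simp only [Prod.mk.injEq, Fin.mk.injEq]
  omega

/-- The first occurrence (of two) in a block. -/
def lo {n : ℕ} (p : Fin n × Fin 2) : Fin n × Fin 4 :=
  (p.1, ⟨2 * (p.2 : ℕ), by have := p.2.isLt; omega⟩)

/-- The second occurrence (of two) in a block. -/
def hi {n : ℕ} (p : Fin n × Fin 2) : Fin n × Fin 4 :=
  (p.1, ⟨2 * (p.2 : ℕ) + 1, by have := p.2.isLt; omega⟩)

lemma occBlock_lo {n : ℕ} (p : Fin n × Fin 2) : occBlock (lo p) = p := by
  simp [occBlock, lo, half]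

lemma occBlock_hi {n : ℕ} (p : Fin n × Fin 2) : occBlock (hi p) = p := by
  obtain ⟨j, q⟩ := p
  fin_cases q <;> simp [occBlock, hi, half]

lemma eq_lo_or_hi {n : ℕ} (x : Fin n × Fin 4) : x = lo (occBlock x) ∨ x = hi (occBlock x) := by
  obtain ⟨j, t⟩ := x
  fin_cases t <;> simp [lo, hi, occBlock, half, Fin.ext_iff]

lemma sum_occ {n : ℕ} (g : Fin n × Fin 4 → ℕ) :
    ∑ x, g x = ∑ p : Fin n × Fin 2, (g (lo p) + g (hi p)) := by
  rw [Fintype.sum_prod_type, Fintype.sum_prod_type]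
  refine Finset.sum_congr rfl fun j _ => ?_
  simp [Fin.sum_univ_four, Fin.sum_univ_two, lo, hi]
  ring_nf

lemma sum_block {n : ℕ} (g : Fin n × Fin 4 → ℕ) (p : Fin n × Fin 2) :
    ∑ x, (if occBlock x = p then g x else 0) = g (lo p) + g (hi p) := by
  rw [sum_occ]
  simp only [occBlock_lo, occBlock_hi]
  rw [Finset.sum_eq_single p] <;> simp +contextual

/-- The job `VJob(j,t,∘)` for the occurrence `x = (j,t)`. -/
abbrev vJob (S : SAT3Star) (x : Fin S.n × Fin 4) (b : Bool) : QJob S := .inr (.inr (x.1, x.2, b))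

/-- The job `CJob(i,s)` for `c = (i,s)`. -/
abbrev cJob (S : SAT3Star) (c : Fin (2 * S.m) × Fin 3) : QJob S := .inr (.inl c)

/-- The condition `φ(i,s) = 1`, i.e. `CJob(i,s)` has size `5`. -/
def big (S : SAT3Star) (i : Fin (2 * S.m)) (s : Fin 3) : Prop :=
  (s : ℕ) = 2 ∨ ((s : ℕ) = 1 ∧ S.m ≤ (i : ℕ))

instance (S : SAT3Star) (i : Fin (2 * S.m)) : DecidablePred (big S i) := fun _ =>
  inferInstanceAs (Decidable (_ ∨ _))

lemma size_cJob (S : SAT3Star) (c : Fin (2 * S.m) × Fin 3) :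
    qSize S (cJob S c) = 4 + if big S c.1 c.2 then 1 else 0 := by
  obtain ⟨i, s⟩ := c
  fin_cases s <;> simp [qSize, big]
  split_ifs <;> omega

lemma sum_big (S : SAT3Star) (i : Fin (2 * S.m)) :
    ∑ s, (if big S i s then 1 else 0) = if (i : ℕ) < S.m then 1 else 2 := by
  simp only [Fin.sum_univ_three, big]
  simp
  split_ifs <;> omega

/-- The number of jobs `VJob(·,·,b)` scheduled on `M`. -/
def vCount (S : SAT3Star) (σ : QJob S → QMach S) (b : Bool) (M : QMach S) : ℕ :=
  ∑ x, if σ (vJob S x b) = M then 1 else 0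

/-- The load of a machine split into the contributions of `TJob`s, `CJob`s and `VJob`s. -/
lemma load_eq (S : SAT3Star) (σ : QJob S → QMach S) (M : QMach S) :
    qLoad S σ M =
      (∑ j : Fin S.n, ((if σ (.inl (j, 0)) = M then 1 else 0) +
        (if σ (.inl (j, 1)) = M then 1 else 0) + 2 * (if σ (.inl (j, 2)) = M then 1 else 0)))
      + (∑ c, if σ (cJob S c) = M then qSize S (cJob S c) else 0)
      + (3 * vCount S σ true M + 2 * vCount S σ false M) := by
  unfold qLoad vCount
  rw [Finset.sum_filter, Fintype.sum_sum_type, Fintype.sum_sum_type, ← add_assoc]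
  congr 1
  · congr 1
    rw [Fintype.sum_prod_type]
    refine Finset.sum_congr rfl fun j _ => ?_
    simp [Fin.sum_univ_three, qSize]
  · rw [Fintype.sum_prod_type, Fintype.sum_prod_type, Fintype.sum_prod_type, Finset.mul_sum,
      Finset.mul_sum, ← Finset.sum_add_distrib]
    refine Finset.sum_congr rfl fun j _ => ?_
    rw [Fintype.sum_prod_type, Finset.mul_sum, Finset.mul_sum, ← Finset.sum_add_distrib]
    refine Finset.sum_congr rfl fun t _ => ?_
    simp [qSize]

lemma lit_eq (S : SAT3Star) (c : Fin (2 * S.m) × Fin 3) :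
    S.lit c.1 c.2 = ((S.occ.symm c).1, decide ((occBlock (S.occ.symm c)).2 = 0)) := by
  have h := S.occ_spec (S.occ.symm c)
  rw [Equiv.apply_symm_apply] at h
  rw [h]
  generalize S.occ.symm c = x
  obtain ⟨j, t⟩ := x
  fin_cases t <;> simp [occBlock, half]

/-- Whether the literal of block `p` (positive for `p.2 = 0`) is true under `α`. -/
def litTrue {n : ℕ} (α : Fin n → Bool) (p : Fin n × Fin 2) : Bool := α p.1 == decide (p.2 = 0)

lemma satisfies_iff (S : SAT3Star) (α : Fin S.n → Bool) :
    S.Satisfies α ↔ ∀ i : Fin (2 * S.m),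
      ∑ s : Fin 3, (if litTrue α (occBlock (S.occ.symm (i, s))) then 1 else 0) =
        if (i : ℕ) < S.m then 1 else 2 := by
  unfold SAT3Star.Satisfies
  refine forall_congr' fun i => ?_
  rw [Finset.card_filter]
  have : ∀ s : Fin 3, (α (S.lit i s).1 = (S.lit i s).2) ↔
      litTrue α (occBlock (S.occ.symm (i, s))) = true := by
    intro s
    rw [lit_eq S (i, s)]
    simp [litTrue, occBlock]
  simp only [this]

/-! ### Eligibility -/

section elig
variable (S : SAT3Star) {M : QMach S}

lemma elig_t0 {j : Fin S.n} : qElig S (.inl (j, 0)) M ↔ M = .inl (j, 0) := by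
  obtain ⟨⟨j', hj'⟩, ⟨q, hq⟩⟩ | c := M
  · have := j.isLt
    simp [qElig, qDem, qCap, Fin.ext_iff]
    omega
  · have := j.isLt
    have := (S.occ.symm c).1.isLt
    have := (S.occ.symm c).2.isLt
    simp [qElig, qDem, qCap]
    omega

lemma elig_t1 {j : Fin S.n} : qElig S (.inl (j, 1)) M ↔ M = .inl (j, 1) := by
  obtain ⟨⟨j', hj'⟩, ⟨q, hq⟩⟩ | c := M
  · have := j.isLt
    simp [qElig, qDem, qCap, Fin.ext_iff]
    omega
  · have := j.isLt
    have := (S.occ.symm c).1.isLt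
    have := (S.occ.symm c).2.isLt
    simp [qElig, qDem, qCap]
    omega

lemma elig_t2 {j : Fin S.n} :
    qElig S (.inl (j, 2)) M ↔ M = .inl (j, 0) ∨ M = .inl (j, 1) := by
  obtain ⟨⟨j', hj'⟩, ⟨q, hq⟩⟩ | c := M
  · have := j.isLt
    simp [qElig, qDem, qCap, Fin.ext_iff]
    omega
  · have := j.isLt
    have := (S.occ.symm c).1.isLt
    have := (S.occ.symm c).2.isLt
    simp [qElig, qDem, qCap]
    omega

lemma elig_c {c : Fin (2 * S.m) × Fin 3} :
    qElig S (cJob S c) M ↔ ∃ c', M = .inr c' ∧ c.1 ≤ c'.1 := by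
  obtain ⟨⟨j', hj'⟩, ⟨q, hq⟩⟩ | c' := M
  · simp [qElig, qDem, qCap]
    omega
  · constructor
    · rintro ⟨h, -⟩
      refine ⟨c', rfl, Fin.le_def.2 ?_⟩
      simpa [qDem, qCap] using h
    · rintro ⟨d, hd, h⟩
      cases hd
      exact ⟨by simpa [qDem, qCap] using h, Nat.zero_le _⟩

lemma rank_le_of_elig_v {x : Fin S.n × Fin 4} {b : Bool} (h : qElig S (vJob S x b) M) :
    rank (occBlock x) ≤ rank (machBlock S M) := by
  obtain ⟨⟨j', hj'⟩, ⟨q, hq⟩⟩ | c' := M <;>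
  · simp [qElig, qDem, qCap] at h
    simp [rank, occBlock, machBlock, half]
    omega

lemma elig_v_truth (x : Fin S.n × Fin 4) (b : Bool) :
    qElig S (vJob S x b) (.inl (occBlock x)) := by
  have := x.1.isLt
  have := x.2.isLt
  simp [qElig, qDem, qCap, occBlock, half]
  omega

lemma elig_v_clause (x : Fin S.n × Fin 4) (b : Bool) :
    qElig S (vJob S x b) (.inr (S.occ x)) := by
  have := x.1.isLt
  have := x.2.isLt
  simp [qElig, qDem, qCap]
  omega

end elig

/-! ### From an assignment to a schedule -/

/-- Two predicates on `Fin 3` with equally many solutions differ by a permutation. -/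
lemma exists_perm (P Q : Fin 3 → Prop) [DecidablePred P] [DecidablePred Q]
    (h : ∑ s, (if P s then 1 else 0) = ∑ s, (if Q s then 1 else 0)) :
    ∃ π : Equiv.Perm (Fin 3), ∀ s, Q (π s) ↔ P s := by
  rw [← Finset.card_filter, ← Finset.card_filter] at h
  have e : {s // P s} ≃ {s // Q s} := Fintype.equivOfCardEq (by
    rw [Fintype.card_subtype, Fintype.card_subtype, h])
  refine ⟨e.extendSubtype, fun s => ⟨fun hq => ?_, fun hp => e.extendSubtype_mem s hp⟩⟩
  by_contra hp
  exact e.extendSubtype_not_mem s hp hq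

/-- The schedule built from an assignment `α` and, for each clause, a permutation of its
`CJob`s. The `VJob` whose type disagrees with the truth value of its literal goes to the clause
machine, the other one to the truth machine. -/
def sched (S : SAT3Star) (α : Fin S.n → Bool) (π : Fin (2 * S.m) → Equiv.Perm (Fin 3)) :
    QJob S → QMach S
  | .inl (j, l) => .inl (j, if l = 0 then 0 else if l = 1 then 1 else if α j then 1 else 0)
  | .inr (.inl (i, s)) => .inr (i, π i s)
  | .inr (.inr (j, t, b)) =>
      if litTrue α (occBlock (j, t)) = b then .inl (occBlock (j, t)) else .inr (S.occ (j, t))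

section forward
variable (S : SAT3Star) (α : Fin S.n → Bool) (π : Fin (2 * S.m) → Equiv.Perm (Fin 3))

lemma vCount_sched_truth (b : Bool) (p : Fin S.n × Fin 2) :
    vCount S (sched S α π) b (.inl p) = if litTrue α p = b then 2 else 0 := by
  have : ∀ x : Fin S.n × Fin 4, (if sched S α π (vJob S x b) = .inl p then 1 else 0) =
      if occBlock x = p then (if litTrue α p = b then 1 else 0) else 0 := by
    intro x
    by_cases h1 : litTrue α (occBlock x) = b <;> by_cases h2 : occBlock x = p
    · subst h2; simp [sched, h1]
    · simp [sched, h1, h2]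
    · subst h2; simp [sched, h1]
    · simp [sched, h1, h2]
  unfold vCount
  rw [Finset.sum_congr rfl fun x _ => this x, sum_block]
  split_ifs <;> rfl

lemma vCount_sched_clause (b : Bool) (c : Fin (2 * S.m) × Fin 3) :
    vCount S (sched S α π) b (.inr c) =
      if litTrue α (occBlock (S.occ.symm c)) = b then 0 else 1 := by
  unfold vCount
  rw [Finset.sum_eq_single (S.occ.symm c)]
  · by_cases h : litTrue α (occBlock (S.occ.symm c)) = b <;> simp [sched, h]
  · intro x _ hx
    have : S.occ x ≠ c := fun h => hx (by simp [← h])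
    by_cases h : litTrue α (occBlock x) = b <;> simp [sched, h, this]
  · simp

lemma sched_spec (hπ : ∀ i s, litTrue α (occBlock (S.occ.symm (i, π i s))) ↔ big S i s) :
    SevenSchedule S (sched S α π) := by
  refine ⟨?_, ?_⟩
  · rintro (⟨j, l⟩ | ⟨i, s⟩ | ⟨j, t, b⟩)
    · fin_cases l
      · exact (elig_t0 S).2 rfl
      · exact (elig_t1 S).2 rfl
      · refine (elig_t2 S).2 ?_
        cases h : α j <;> simp [sched, h]
    · exact (elig_c S).2 ⟨(i, π i s), rfl, le_rfl⟩
    · simp only [sched]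
      split_ifs
      · exact elig_v_truth S (j, t) b
      · exact elig_v_clause S (j, t) b
  · rintro (⟨j, q⟩ | ⟨i, s⟩)
    · rw [load_eq, vCount_sched_truth, vCount_sched_truth]
      rw [Finset.sum_eq_single j (by intro j' _ hj'; simp [sched, hj']) (by simp)]
      fin_cases q <;> cases h : α j <;> simp [sched, litTrue, h]
    · rw [load_eq, vCount_sched_clause, vCount_sched_clause]
      obtain ⟨s, rfl⟩ := (π i).surjective s
      rw [Finset.sum_eq_single (a := ((i, s) : Fin (2 * S.m) × Fin 3))]
      · rw [size_cJob]
        have := hπ i s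
        by_cases hb : big S i s
        · simp [sched, hb, this.2 hb]
        · have h' : litTrue α (occBlock (S.occ.symm (i, π i s))) = false := by
            simpa using mt this.1 hb
          simp [sched, hb, h']
      · rintro ⟨i', s'⟩ _ hne
        have : ¬ (i' = i ∧ π i' s' = π i s) := by
          rintro ⟨rfl, h⟩
          exact hne (by rw [(π i').injective h])
        simp [sched, this]
      · simp

end forward

/-! ### From a schedule to an assignment -/

section backward
variable {S : SAT3Star} {σ : QJob S → QMach S}

/-- Double counting of the `VJob`s of one type, weighted by a function of their machine. -/
lemma sum_vCount (g : QMach S → ℕ) (b : Bool) :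
    ∑ x, g (σ (vJob S x b)) =
      ∑ p, g (.inl p) * vCount S σ b (.inl p)
        + ∑ x, g (.inr (S.occ x)) * vCount S σ b (.inr (S.occ x)) := by
  rw [Equiv.sum_comp S.occ (fun c => g (.inr c) * vCount S σ b (.inr c)),
    ← Fintype.sum_sum_type (fun M : QMach S => g M * vCount S σ b M)]
  simp only [vCount, Finset.mul_sum]
  rw [Finset.sum_comm]
  refine Finset.sum_congr rfl fun x _ => ?_
  simp

/-- The `CJob`s occupy the clause machines bijectively, staying within their clause. -/
lemma exists_clause_equiv (h : SevenSchedule S σ) :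
    ∃ e : (Fin (2 * S.m) × Fin 3) ≃ (Fin (2 * S.m) × Fin 3),
      (∀ c, σ (cJob S c) = .inr (e c)) ∧ ∀ c, (e c).1 = c.1 := by
  choose f hf hle using fun c => (elig_c S).1 (h.1 (cJob S c))
  have hinj : Function.Injective f := by
    intro c c' hcc
    by_contra hne
    have hl := h.2 (.inr (f c))
    rw [load_eq] at hl
    have h2 : ∑ d ∈ {c, c'}, (if σ (cJob S d) = .inr (f c) then qSize S (cJob S d) else 0) ≤
        ∑ d, (if σ (cJob S d) = .inr (f c) then qSize S (cJob S d) else 0) :=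
      Finset.sum_le_sum_of_subset (Finset.subset_univ _)
    rw [Finset.sum_pair hne, hf, hf, if_pos rfl, if_pos (by rw [hcc]), size_cJob, size_cJob] at h2
    omega
  have hbij := Finite.injective_iff_bijective.1 hinj
  refine ⟨Equiv.ofBijective f hbij, hf, ?_⟩
  have hsum : ∑ c : Fin (2 * S.m) × Fin 3, (c.1 : ℕ) = ∑ c, ((f c).1 : ℕ) :=
    (hbij.sum_comp (fun c : Fin (2 * S.m) × Fin 3 => (c.1 : ℕ))).symm
  have := (Finset.sum_eq_sum_iff_of_le (fun c _ => Fin.le_def.1 (hle c))).1 hsum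
  intro c
  exact (Fin.ext (this c (Finset.mem_univ c))).symm

/-- A clause machine carries its unique `CJob` and a single `VJob`, of type `⊥` iff the
`CJob` has size `5`. -/
lemma cload (h : SevenSchedule S σ) {e : (Fin (2 * S.m) × Fin 3) ≃ (Fin (2 * S.m) × Fin 3)}
    (he : ∀ c, σ (cJob S c) = .inr (e c)) (c : Fin (2 * S.m) × Fin 3) :
    vCount S σ true (.inr c) + vCount S σ false (.inr c) = 1 ∧
    vCount S σ false (.inr c) = if big S (e.symm c).1 (e.symm c).2 then 1 else 0 := by
  have hl := h.2 (.inr c)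
  rw [load_eq, Finset.sum_eq_zero, Finset.sum_eq_single (e.symm c)] at hl
  · rw [he, e.apply_symm_apply, if_pos rfl, size_cJob] at hl
    split_ifs at hl ⊢ <;> omega
  · intro c' _ hc'
    rw [he, if_neg]
    intro h'
    exact hc' (by rw [← Sum.inr.inj h', e.symm_apply_apply])
  · simp
  · intro j _
    rw [(elig_t0 S).1 (h.1 (.inl (j, 0))), (elig_t1 S).1 (h.1 (.inl (j, 1)))]
    rcases (elig_t2 S).1 (h.1 (.inl (j, 2))) with h2 | h2 <;> simp [h2]

/-- Load equation of a truth machine: one `TJob` of size `1`, possibly `TJob(j,2)`, and `VJob`s. -/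
lemma tload_eq (h : SevenSchedule S σ) (p : Fin S.n × Fin 2) :
    1 + 2 * (if σ (.inl (p.1, 2)) = .inl p then 1 else 0)
      + (3 * vCount S σ true (.inl p) + 2 * vCount S σ false (.inl p)) = 7 := by
  have hl := h.2 (.inl p)
  obtain ⟨j, q⟩ := p
  rw [load_eq, Finset.sum_eq_single j] at hl
  · rw [Finset.sum_eq_zero (s := Finset.univ), (elig_t0 S).1 (h.1 (.inl (j, 0))),
      (elig_t1 S).1 (h.1 (.inl (j, 1)))] at hl
    · rw [← hl]
      fin_cases q <;> simp
    · intro c _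
      obtain ⟨c', hc', -⟩ := (elig_c S).1 (h.1 (cJob S c))
      rw [hc']
      simp
  · intro j' _ hj'
    rw [(elig_t0 S).1 (h.1 (.inl (j', 0))), (elig_t1 S).1 (h.1 (.inl (j', 1)))]
    rcases (elig_t2 S).1 (h.1 (.inl (j', 2))) with h2 | h2 <;> simp [h2, hj']
  · simp

/-- A truth machine carries exactly two `VJob`s, both `⊥` if `TJob(j,2)` is on it and both `⊤`
otherwise. -/
lemma tload (h : SevenSchedule S σ) (p : Fin S.n × Fin 2) :
    vCount S σ true (.inl p) + vCount S σ false (.inl p) = 2 ∧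
    vCount S σ false (.inl p) = 2 * (if σ (.inl (p.1, 2)) = .inl p then 1 else 0) := by
  obtain ⟨e, he, -⟩ := exists_clause_equiv h
  have hge : ∀ p ∈ (Finset.univ : Finset (Fin S.n × Fin 2)),
      2 ≤ vCount S σ true (.inl p) + vCount S σ false (.inl p) := by
    intro p _
    have := tload_eq h p
    split_ifs at this <;> omega
  have hsum : ∑ p : Fin S.n × Fin 2, 2 =
      ∑ p, (vCount S σ true (.inl p) + vCount S σ false (.inl p)) := by
    have h1 := sum_vCount (σ := σ) (fun _ => 1) true
    have h2 := sum_vCount (σ := σ) (fun _ => 1) false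
    have h3 : ∑ x, (vCount S σ true (.inr (S.occ x)) + vCount S σ false (.inr (S.occ x)))
        = ∑ x : Fin S.n × Fin 4, 1 := Finset.sum_congr rfl fun x _ => (cload h he _).1
    rw [Finset.sum_add_distrib] at h3 ⊢
    simp only [one_mul] at h1 h2
    simp only [Finset.sum_const, Finset.card_univ, Fintype.card_prod, Fintype.card_fin,
      smul_eq_mul] at h1 h2 h3 ⊢
    omega
  have h2 := (Finset.sum_eq_sum_iff_of_le hge).1 hsum p (Finset.mem_univ p)
  have := tload_eq h p
  split_ifs at this ⊢ <;> omega

/-- Every `VJob` is scheduled within its own block. -/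
lemma blk_eq (h : SevenSchedule S σ) (x : Fin S.n × Fin 4) (b : Bool) :
    machBlock S (σ (vJob S x b)) = occBlock x := by
  obtain ⟨e, he, -⟩ := exists_clause_equiv h
  have hle : ∀ b, ∀ x ∈ (Finset.univ : Finset (Fin S.n × Fin 4)),
      rank (occBlock x) ≤ rank (machBlock S (σ (vJob S x b))) :=
    fun b x _ => rank_le_of_elig_v S (h.1 _)
  have h1 := sum_vCount (σ := σ) (fun M => rank (machBlock S M)) true
  have h2 := sum_vCount (σ := σ) (fun M => rank (machBlock S M)) false
  have hT : ∑ p, rank p * vCount S σ true (.inl p) + ∑ p, rank p * vCount S σ false (.inl p)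
      = ∑ x : Fin S.n × Fin 4, rank (occBlock x) := by
    rw [← Finset.sum_add_distrib, sum_occ]
    refine Finset.sum_congr rfl fun p _ => ?_
    rw [← mul_add, (tload h p).1, occBlock_lo, occBlock_hi, mul_two]
  have hC : ∑ x, rank (occBlock x) * vCount S σ true (.inr (S.occ x))
      + ∑ x, rank (occBlock x) * vCount S σ false (.inr (S.occ x))
      = ∑ x : Fin S.n × Fin 4, rank (occBlock x) := by
    rw [← Finset.sum_add_distrib]
    refine Finset.sum_congr rfl fun x _ => ?_
    rw [← mul_add, (cload h he _).1, mul_one]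
  simp only [machBlock_inl, machBlock_occ] at h1 h2
  have h3 := Finset.sum_le_sum (hle true)
  have h4 := Finset.sum_le_sum (hle false)
  have hsum : ∀ b, ∑ x : Fin S.n × Fin 4, rank (occBlock x) = ∑ x, rank (machBlock S (σ (vJob S x b))) := by
    intro b
    cases b <;> omega
  exact (rank_injective
    ((Finset.sum_eq_sum_iff_of_le (hle b)).1 (hsum b) x (Finset.mem_univ x))).symm

/-- The clause machine of an occurrence carries a `⊥`-job iff `TJob(j,2)` is not on the truth
machine of the same block. -/
lemma bot_clause (h : SevenSchedule S σ) (x : Fin S.n × Fin 4) :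
    vCount S σ false (.inr (S.occ x)) =
      if σ (.inl (x.1, 2)) = .inl (occBlock x) then 0 else 1 := by
  obtain ⟨e, he, -⟩ := exists_clause_equiv h
  -- the block contains two `⊥`-jobs and none of them leaves it
  have hcount : ∀ p : Fin S.n × Fin 2, vCount S σ false (.inl p)
      + (vCount S σ false (.inr (S.occ (lo p))) + vCount S σ false (.inr (S.occ (hi p)))) = 2 := by
    intro p
    obtain ⟨d, hd⟩ : ∃ d : Fin S.n × Fin 2 → ℕ, ∀ p', d p' = if p' = p then 1 else 0 :=
      ⟨_, fun _ => rfl⟩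
    have h1 := sum_vCount (σ := σ) (fun M => d (machBlock S M)) false
    simp only [blk_eq h, machBlock_inl, machBlock_occ, hd, ite_mul, one_mul, zero_mul] at h1
    rw [sum_block, sum_block, Finset.sum_ite_eq' Finset.univ p, if_pos (Finset.mem_univ p)] at h1
    exact h1.symm
  have h1 := hcount (occBlock x)
  have h2 := (tload h (occBlock x)).2
  have h3 := (cload h he (S.occ (lo (occBlock x)))).1
  have h4 := (cload h he (S.occ (hi (occBlock x)))).1
  have h5 : (occBlock x).1 = x.1 := rfl
  rw [h5] at h2
  have key : vCount S σ false (.inr (S.occ (lo (occBlock x)))) =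
        (if σ (.inl (x.1, 2)) = .inl (occBlock x) then 0 else 1) ∧
      vCount S σ false (.inr (S.occ (hi (occBlock x)))) =
        (if σ (.inl (x.1, 2)) = .inl (occBlock x) then 0 else 1) := by
    split_ifs at h2 ⊢ <;> omega
  rcases eq_lo_or_hi x with hx | hx
  · rw [← hx] at key
    exact key.1
  · rw [← hx] at key
    exact key.2

lemma satisfies_of_schedule (h : SevenSchedule S σ) :
    S.Satisfies (fun j => decide (σ (.inl (j, 2)) = .inl (j, 1))) := by
  obtain ⟨e, he, he1⟩ := exists_clause_equiv h
  rw [satisfies_iff]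
  intro i
  have hlit : ∀ s, (if litTrue (fun j => decide (σ (.inl (j, 2)) = .inl (j, 1)))
      (occBlock (S.occ.symm (i, s))) then 1 else 0) =
      if big S (e.symm (i, s)).1 (e.symm (i, s)).2 then 1 else 0 := by
    intro s
    rw [← (cload h he (i, s)).2]
    have := bot_clause h (S.occ.symm (i, s))
    rw [Equiv.apply_symm_apply] at this
    rw [this]
    generalize S.occ.symm (i, s) = x
    have h5 : (occBlock x).1 = x.1 := rfl
    rw [← h5]
    obtain ⟨j, q⟩ := occBlock x
    rcases (elig_t2 S).1 (h.1 (.inl (j, 2))) with h2 | h2 <;> fin_cases q <;> simp [litTrue, h2]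
  -- `e` permutes the positions within each clause
  have he1' : ∀ s, (e.symm (i, s)).1 = i := fun s => by
    rw [← he1 (e.symm (i, s)), e.apply_symm_apply]
  have hbij : Function.Bijective (fun s => (e.symm (i, s)).2) := by
    refine Finite.injective_iff_bijective.1 fun s s' hs => ?_
    have : e.symm (i, s) = e.symm (i, s') := Prod.ext (by rw [he1', he1']) hs
    simpa using this
  rw [Finset.sum_congr rfl fun s _ => hlit s, ← sum_big S i,
    ← hbij.sum_comp (fun s => if big S i s then 1 else 0)]
  simp only [he1']

end backward

/-- the 3-SAT* instance is satisfiable iff the constructed 2-RAR instance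
admits a 7-schedule. -/
theorem statement12 (S : SAT3Star) :
    (∃ α, S.Satisfies α) ↔ (∃ σ : QJob S → QMach S, SevenSchedule S σ) := by
  constructor
  · rintro ⟨α, hα⟩
    rw [satisfies_iff] at hα
    have : ∀ i, ∃ π : Equiv.Perm (Fin 3),
        ∀ s, litTrue α (occBlock (S.occ.symm (i, π s))) = true ↔ big S i s := fun i =>
      exists_perm (big S i) (fun s => litTrue α (occBlock (S.occ.symm (i, s))) = true)
        ((sum_big S i).trans (hα i).symm)
    choose π hπ using this
    exact ⟨_, sched_spec S α π hπ⟩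
  · rintro ⟨σ, h⟩
    exact ⟨_, satisfies_of_schedule h⟩
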